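/- arXiv:2308.09429 — 7 statements merged into one kernel-verified Lean document; each statement's English description precedes it below -/
import Mathlib

section
/- Let q₁ and q₂ be nonsingular quadratic forms on finite-dimensional 𝔽₂-vector spaces V₁ and V₂ respectively. Then there exists a linear isomorphism φ : V₁ → V₂ with q₂(φ(x)) = q₁(x) for all x ∈ V₁ if and only if dim V₁ = dim V₂ and S(q₁) = S(q₂) (i.e. the two forms have the same dimension and the same Arf invariant). -/
/-- The bilinear form `B(x,y) = q(x+y) + q(x) + q(y)` associated to `q : V → 𝔽₂`. -/
def assocBilin {V : Type*} [AddCommGroup V] (q : V → ZMod 2) (x y : V) : ZMod 2 :=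
  q (x + y) + q x + q y

/-- `q` is a quadratic form if its associated form `B` is bilinear. -/
def IsQuadraticForm {V : Type*} [AddCommGroup V] (q : V → ZMod 2) : Prop :=
  ∀ x x' y : V, assocBilin q (x + x') y = assocBilin q x y + assocBilin q x' y

/-- `q` is nonsingular if the radical of its associated bilinear form is trivial. -/
def IsNonsingularQF {V : Type*} [AddCommGroup V] (q : V → ZMod 2) : Prop :=
  ∀ x : V, (∀ y : V, assocBilin q x y = 0) → x = 0

/-- The Gauss sum `S(q) = Σ_{x ∈ V} (-1)^{q(x)}`. -/
def gaussSumQ {V : Type*} [Fintype V] (q : V → ZMod 2) : ℤ :=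
  ∑ x : V, if q x = 0 then 1 else -1

lemma z2_cases : ∀ a : ZMod 2, a = 0 ∨ a = 1 := by decide

lemma z2_self : ∀ a : ZMod 2, a + a = 0 := by decide

lemma qf_zero {V : Type*} [AddCommGroup V] {q : V → ZMod 2} (hq : IsQuadraticForm q) :
    q 0 = 0 := by
  have h := hq 0 0 0
  simp only [assocBilin, add_zero] at h
  revert h
  generalize q 0 = a
  revert a
  decide

lemma qf_add {V : Type*} [AddCommGroup V] (q : V → ZMod 2) (x y : V) :
    q (x + y) = assocBilin q x y + q x + q y := by
  unfold assocBilin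
  generalize q (x + y) = a
  generalize q x = b
  generalize q y = c
  revert a b c
  decide

lemma assoc_comm {V : Type*} [AddCommGroup V] (q : V → ZMod 2) (x y : V) :
    assocBilin q x y = assocBilin q y x := by
  unfold assocBilin
  rw [add_comm x y]
  ring

lemma assoc_self {V : Type*} [AddCommGroup V] [Module (ZMod 2) V] {q : V → ZMod 2}
    (hq : IsQuadraticForm q) (x : V) : assocBilin q x x = 0 := by
  unfold assocBilin
  have : x + x = 0 := by
    rw [← two_smul (ZMod 2) x, show (2 : ZMod 2) = 0 from rfl, zero_smul]
  rw [this, qf_zero hq, zero_add, z2_self]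

/-- The linear functional given by the associated form. -/
def assocLin {V : Type*} [AddCommGroup V] [Module (ZMod 2) V] {q : V → ZMod 2}
    (hq : IsQuadraticForm q) (x : V) : V →ₗ[ZMod 2] ZMod 2 :=
  AddMonoidHom.toZModLinearMap 2 (AddMonoidHom.mk' (fun v => assocBilin q v x)
    (fun a b => hq a b x))

lemma assocLin_apply {V : Type*} [AddCommGroup V] [Module (ZMod 2) V] {q : V → ZMod 2}
    (hq : IsQuadraticForm q) (x v : V) : assocLin hq x v = assocBilin q v x := rfl

lemma exists_pair {V : Type*} [AddCommGroup V] [Module (ZMod 2) V] {q : V → ZMod 2}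
    (hq : IsQuadraticForm q) (hns : IsNonsingularQF q) (e : V) (he : e ≠ 0) (hqe : q e = 0) :
    ∃ f : V, q f = 0 ∧ assocBilin q e f = 1 := by
  have h : ∃ f, assocBilin q e f ≠ 0 := by
    by_contra! hc
    exact he (hns e hc)
  obtain ⟨f, hf⟩ := h
  have hf1 := (z2_cases _).resolve_left hf
  rcases z2_cases (q f) with h0 | h1
  · exact ⟨f, h0, hf1⟩
  · refine ⟨e + f, ?_, ?_⟩
    · rw [qf_add q, hf1, hqe, h1]; rfl
    · rw [assoc_comm, hq, assoc_self hq, assoc_comm q f e, hf1]; rfl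

lemma split {V : Type*} [AddCommGroup V] [Module (ZMod 2) V] {q : V → ZMod 2}
    (hq : IsQuadraticForm q) (hns : IsNonsingularQF q) (e : V) (he : e ≠ 0) (hqe : q e = 0) :
    ∃ (W : Submodule (ZMod 2) V) (Φ : (ZMod 2 × ZMod 2 × W) ≃ₗ[ZMod 2] V),
      (∀ a b w, q (Φ (a, b, w)) = a * b + q w) ∧
      IsQuadraticForm (fun w : W => q w) ∧ IsNonsingularQF (fun w : W => q w) := by
  obtain ⟨f, hqf, hef⟩ := exists_pair hq hns e he hqe
  have hfe : assocBilin q f e = 1 := by rw [assoc_comm, hef]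
  let W : Submodule (ZMod 2) V := LinearMap.ker (assocLin hq e) ⊓ LinearMap.ker (assocLin hq f)
  have hW : ∀ w : W, assocLin hq e w = 0 ∧ assocLin hq f w = 0 := fun w => w.2
  have ee : assocLin hq e e = 0 := assoc_self hq e
  have ff : assocLin hq f f = 0 := assoc_self hq f
  have ef : assocLin hq f e = 1 := hef
  have fe : assocLin hq e f = 1 := hfe
  let L : (ZMod 2 × ZMod 2 × W) →ₗ[ZMod 2] V :=
    { toFun := fun p => p.1 • e + p.2.1 • f + p.2.2
      map_add' := by
        intro x y
        simp only [Prod.fst_add, Prod.snd_add, add_smul, Submodule.coe_add]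
        abel
      map_smul' := by
        intro c x
        simp [smul_add, mul_smul] }
  have hL : ∀ a b w, L (a, b, w) = a • e + b • f + w := fun _ _ _ => rfl
  have hbij : Function.Bijective L := by
    constructor
    · rw [injective_iff_map_eq_zero]
      rintro ⟨a, b, w⟩ h
      rw [hL] at h
      have h1 := congrArg (assocLin hq e) h
      have h2 := congrArg (assocLin hq f) h
      simp [ee, fe, (hW w).1] at h1
      simp [ef, ff, (hW w).2] at h2
      subst h1 h2
      simp at h
      simp [h]
    · intro v
      refine ⟨(assocLin hq f v, assocLin hq e v,
        ⟨v - assocLin hq f v • e - assocLin hq e v • f, ?_, ?_⟩), ?_⟩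
      · simp [ee, fe]
      · simp [ef, ff]
      · rw [hL]; simp
  let Φ := LinearEquiv.ofBijective L hbij
  have hΦ : ∀ a b w, q (Φ (a, b, w)) = a * b + q w := by
    intro a b w
    change q (a • e + b • f + w) = _
    have h1 : assocBilin q (a • e + b • f) w = 0 := by
      have hwe : assocBilin q e w = 0 := by rw [assoc_comm]; exact (hW w).1
      have hwf : assocBilin q f w = 0 := by rw [assoc_comm]; exact (hW w).2
      rw [← assocLin_apply hq, map_add, map_smul, map_smul]
      simp only [assocLin_apply, hwe, hwf, smul_zero, add_zero]
    rw [qf_add q, h1]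
    rcases z2_cases a with rfl | rfl <;> rcases z2_cases b with rfl | rfl <;>
      simp [qf_zero hq, hqe, hqf, qf_add q e f, hef]
  have hqW : IsQuadraticForm (fun w : W => q w) := fun x x' y => hq x x' y
  refine ⟨W, Φ, hΦ, hqW, ?_⟩
  intro w hw
  have h0 : Φ (0, 0, w) = 0 := by
    apply hns
    intro y
    obtain ⟨⟨a, b, w'⟩, rfl⟩ := Φ.surjective y
    have := hw w'
    simp only [assocBilin] at this
    unfold assocBilin
    rw [← map_add, Prod.mk_add_mk, Prod.mk_add_mk, hΦ, hΦ, hΦ, zero_add, zero_add, zero_mul]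
    linear_combination this + z2_self (a * b)
  have := (LinearEquiv.map_eq_zero_iff Φ).1 h0
  simpa using this

lemma gauss_equiv {V W : Type*} [Fintype V] [Fintype W] (q : V → ZMod 2) (r : W → ZMod 2)
    (φ : V ≃ W) (h : ∀ x, r (φ x) = q x) : gaussSumQ q = gaussSumQ r := by
  unfold gaussSumQ
  rw [← φ.sum_comp]
  simp [h]

lemma gauss_prod {W : Type*} [Fintype W] (q : W → ZMod 2) :
    gaussSumQ (fun p : ZMod 2 × ZMod 2 × W => p.1 * p.2.1 + q p.2.2) = 2 * gaussSumQ q := by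
  unfold gaussSumQ
  have key : ∀ a : ZMod 2, (if 1 + a = 0 then (1 : ℤ) else -1) = - (if a = 0 then 1 else -1) := by
    decide
  have u : ∀ g : ZMod 2 → ℤ, ∑ a : ZMod 2, g a = g 0 + g 1 := fun g => Fin.sum_univ_two g
  rw [Fintype.sum_prod_type, u]
  rw [Fintype.sum_prod_type, Fintype.sum_prod_type, u, u]
  simp only [zero_mul, mul_zero, zero_add, mul_one, key, Finset.sum_neg_distrib]
  ring

lemma gauss_count {V : Type*} [Fintype V] (q : V → ZMod 2) :
    gaussSumQ q = 2 * ((Finset.univ.filter (fun x => q x = 0)).card : ℤ) - Fintype.card V := by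
  unfold gaussSumQ
  have : ∀ x, (if q x = 0 then (1 : ℤ) else -1) = 2 * (if q x = 0 then 1 else 0) - 1 := by
    intro x; split_ifs <;> norm_num
  simp only [this, Finset.sum_sub_distrib, ← Finset.mul_sum]
  simp

lemma aniso_iff {V : Type*} [AddCommGroup V] [Fintype V] {q : V → ZMod 2}
    (hq : IsQuadraticForm q) :
    (∀ x, q x = 0 → x = 0) ↔ gaussSumQ q = 2 - Fintype.card V := by
  rw [gauss_count]
  have : (Finset.univ.filter (fun x => q x = 0)).card = 1 ↔ (∀ x, q x = 0 → x = 0) := by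
    rw [Finset.card_eq_one]
    constructor
    · rintro ⟨a, ha⟩ x hx
      have h1 : x ∈ ({a} : Finset V) := by rw [← ha]; simp [hx]
      have h2 : (0 : V) ∈ ({a} : Finset V) := by rw [← ha]; simp [qf_zero hq]
      rw [Finset.mem_singleton] at h1 h2
      rw [h1, h2]
    · intro h
      refine ⟨0, ?_⟩
      ext x
      simp only [Finset.mem_filter, Finset.mem_univ, true_and, Finset.mem_singleton]
      exact ⟨h x, fun hx => by rw [hx, qf_zero hq]⟩
  rw [← this]
  omega

universe u v

lemma classify (n : ℕ) : ∀ {V₁ : Type u} {V₂ : Type v}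
    [AddCommGroup V₁] [Module (ZMod 2) V₁] [Fintype V₁]
    [AddCommGroup V₂] [Module (ZMod 2) V₂] [Fintype V₂]
    (q₁ : V₁ → ZMod 2) (_ : IsQuadraticForm q₁) (_ : IsNonsingularQF q₁)
    (q₂ : V₂ → ZMod 2) (_ : IsQuadraticForm q₂) (_ : IsNonsingularQF q₂)
    (_ : Module.finrank (ZMod 2) V₁ = n) (_ : Module.finrank (ZMod 2) V₂ = n)
    (_ : gaussSumQ q₁ = gaussSumQ q₂),
    ∃ φ : V₁ ≃ₗ[ZMod 2] V₂, ∀ x : V₁, q₂ (φ x) = q₁ x := by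
  induction n using Nat.strong_induction_on with
  | _ n ih =>
  intro V₁ V₂ _ _ _ _ _ _ q₁ hq₁ hns₁ q₂ hq₂ hns₂ hd₁ hd₂ hS
  let ψ : V₁ ≃ₗ[ZMod 2] V₂ := LinearEquiv.ofFinrankEq _ _ (hd₁.trans hd₂.symm)
  have hcard : Fintype.card V₁ = Fintype.card V₂ := Fintype.card_congr ψ.toEquiv
  have hiff : (∀ x, q₁ x = 0 → x = 0) ↔ (∀ x, q₂ x = 0 → x = 0) := by
    rw [aniso_iff hq₁, aniso_iff hq₂, hS, hcard]
  by_cases h1 : ∀ x, q₁ x = 0 → x = 0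
  · have h2 := hiff.1 h1
    refine ⟨ψ, fun x => ?_⟩
    by_cases hx : x = 0
    · rw [hx, map_zero, qf_zero hq₁, qf_zero hq₂]
    · rw [(z2_cases (q₁ x)).resolve_left (fun h => hx (h1 x h)),
        (z2_cases (q₂ (ψ x))).resolve_left
          (fun h => hx ((LinearEquiv.map_eq_zero_iff ψ).1 (h2 _ h)))]
  · have h2 : ¬ ∀ x, q₂ x = 0 → x = 0 := fun h => h1 (hiff.2 h)
    push Not at h1 h2
    obtain ⟨e₁, hqe₁, he₁⟩ := h1
    obtain ⟨e₂, hqe₂, he₂⟩ := h2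
    obtain ⟨W₁, Φ₁, hΦ₁, hQ₁, hN₁⟩ := split hq₁ hns₁ e₁ he₁ hqe₁
    obtain ⟨W₂, Φ₂, hΦ₂, hQ₂, hN₂⟩ := split hq₂ hns₂ e₂ he₂ hqe₂
    have f₁ := Φ₁.finrank_eq
    have f₂ := Φ₂.finrank_eq
    simp only [Module.finrank_prod, Module.finrank_self] at f₁ f₂
    classical
    letI : Fintype W₁ := Fintype.ofFinite _
    letI : Fintype W₂ := Fintype.ofFinite _
    have g₁ := gauss_equiv _ _ Φ₁.toEquiv (fun x => hΦ₁ x.1 x.2.1 x.2.2)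
    have g₂ := gauss_equiv _ _ Φ₂.toEquiv (fun x => hΦ₂ x.1 x.2.1 x.2.2)
    rw [gauss_prod (fun w : W₁ => q₁ w)] at g₁
    rw [gauss_prod (fun w : W₂ => q₂ w)] at g₂
    obtain ⟨χ, hχ⟩ := ih (Module.finrank (ZMod 2) W₁) (by omega)
      (fun w : W₁ => q₁ w) hQ₁ hN₁ (fun w : W₂ => q₂ w) hQ₂ hN₂ rfl (by omega) (by omega)
    refine ⟨Φ₁.symm.trans (((LinearEquiv.refl _ _).prodCongr
      ((LinearEquiv.refl _ _).prodCongr χ)).trans Φ₂), fun x => ?_⟩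
    obtain ⟨⟨a, b, w⟩, rfl⟩ := Φ₁.surjective x
    rw [hΦ₁, ← hχ w]
    simp [hΦ₂]

/-- Arf's classification: two nonsingular quadratic forms over `𝔽₂` are isomorphic
if and only if they have the same dimension and the same Arf invariant (encoded here
by the Gauss sum). -/
theorem stmt2 {V₁ V₂ : Type*}
    [AddCommGroup V₁] [Module (ZMod 2) V₁] [Fintype V₁]
    [AddCommGroup V₂] [Module (ZMod 2) V₂] [Fintype V₂]
    (q₁ : V₁ → ZMod 2) (hq₁ : IsQuadraticForm q₁) (hns₁ : IsNonsingularQF q₁)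
    (q₂ : V₂ → ZMod 2) (hq₂ : IsQuadraticForm q₂) (hns₂ : IsNonsingularQF q₂) :
    (∃ φ : V₁ ≃ₗ[ZMod 2] V₂, ∀ x : V₁, q₂ (φ x) = q₁ x) ↔
      (Module.finrank (ZMod 2) V₁ = Module.finrank (ZMod 2) V₂ ∧
        gaussSumQ q₁ = gaussSumQ q₂) := by
  constructor
  · rintro ⟨φ, h⟩
    exact ⟨φ.finrank_eq, gauss_equiv _ _ φ.toEquiv h⟩
  · rintro ⟨hd, hS⟩
    exact classify _ q₁ hq₁ hns₁ q₂ hq₂ hns₂ hd rfl hS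
end

section
/- Let V be a finite-dimensional vector space over 𝔽₂ and q : V → 𝔽₂ a quadratic form with associated bilinear form B. If q(z) = 0 for every z ∈ rad(B), then the Gauss sum satisfies S(q)² = 2^{dim V + dim rad(B)}; in particular S(q) ≠ 0. -/
theorem assocBilin_zero_left {V : Type*} [AddCommGroup V] (q : V → ZMod 2)
    (hq : IsQuadraticForm q) (y : V) : assocBilin q 0 y = 0 := by
  have h := hq 0 0 y
  rw [add_zero] at h
  have h2 : ∀ a : ZMod 2, a + a = 0 := by decide
  exact h.trans (h2 _)

/-- The radical of the bilinear form associated to a quadratic form `q`, as a submodule. -/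
def qRadical {V : Type*} [AddCommGroup V] [Module (ZMod 2) V]
    (q : V → ZMod 2) (hq : IsQuadraticForm q) : Submodule (ZMod 2) V where
  carrier := {x | ∀ y, assocBilin q x y = 0}
  add_mem' := by
    intro a b ha hb
    simp only [Set.mem_setOf_eq] at *
    intro y
    rw [hq a b y, ha y, hb y, add_zero]
  zero_mem' := by
    simp only [Set.mem_setOf_eq]
    exact assocBilin_zero_left q hq
  smul_mem' := by
    intro c x hx
    simp only [Set.mem_setOf_eq] at *
    have hc : c = 0 ∨ c = 1 := by revert c; decide
    rcases hc with rfl | rfl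
    · rw [zero_smul]; exact assocBilin_zero_left q hq
    · rw [one_smul]; exact hx

theorem sgn_add_aux : ∀ a b : ZMod 2, (if a + b = 0 then (1:ℤ) else -1) =
    (if a = 0 then 1 else -1) * (if b = 0 then 1 else -1) := by decide

theorem inner_sum_aux {V : Type*} [AddCommGroup V] [Fintype V]
    (q : V → ZMod 2) (hq : IsQuadraticForm q) (z : V) [Decidable (∀ y, assocBilin q z y = 0)] :
    ∑ y : V, (if assocBilin q z y = 0 then (1:ℤ) else -1) =
      if (∀ y, assocBilin q z y = 0) then (Fintype.card V : ℤ) else 0 := by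
  have symm : ∀ x y, assocBilin q x y = assocBilin q y x := by
    intro x y
    unfold assocBilin
    rw [add_comm x y]; ring
  split_ifs with h
  · simp [h]
  · push Not at h
    obtain ⟨w, hw⟩ := h
    have h1 : ∑ y : V, (if assocBilin q z y = 0 then (1:ℤ) else -1) =
        ∑ y : V, (if assocBilin q z (y + w) = 0 then (1:ℤ) else -1) :=
      (Equiv.sum_comp (Equiv.addRight w)
        (fun y => if assocBilin q z y = 0 then (1:ℤ) else -1)).symm
    have h2 : ∀ y, (if assocBilin q z (y + w) = 0 then (1:ℤ) else -1) =
        -(if assocBilin q z y = 0 then (1:ℤ) else -1) := by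
      intro y
      rw [symm z (y + w), hq, symm y z, symm w z, sgn_add_aux, if_neg hw]
      ring
    simp only [h2, Finset.sum_neg_distrib] at h1
    linarith

/-- If a quadratic form `q` vanishes on the radical of its associated bilinear form, then
`S(q)² = 2^{dim V + dim rad(B)}`; in particular `S(q) ≠ 0`. -/
theorem stmt4 {V : Type*} [AddCommGroup V] [Module (ZMod 2) V] [Fintype V]
    (q : V → ZMod 2) (hq : IsQuadraticForm q)
    (hvan : ∀ z : V, (∀ y : V, assocBilin q z y = 0) → q z = 0) :
    (gaussSumQ q) ^ 2
        = 2 ^ (Module.finrank (ZMod 2) V + Module.finrank (ZMod 2) (qRadical q hq)) ∧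
      gaussSumQ q ≠ 0 := by
  classical
  have key : (gaussSumQ q) ^ 2
        = 2 ^ (Module.finrank (ZMod 2) V + Module.finrank (ZMod 2) (qRadical q hq)) := by
    have hs : ∀ z y : V, (if q (z + y) = 0 then (1:ℤ) else -1) * (if q y = 0 then 1 else -1) =
        (if q z = 0 then 1 else -1) * (if assocBilin q z y = 0 then 1 else -1) := by
      intro z y
      rw [← sgn_add_aux, ← sgn_add_aux]
      have : ∀ a b c : ZMod 2, a + c = b + (a + b + c) := by decide
      rw [assocBilin, ← this]
    have hcV : (Fintype.card V : ℤ) = 2 ^ Module.finrank (ZMod 2) V := by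
      rw [Module.card_eq_pow_finrank (K := ZMod 2) (V := V), ZMod.card]; simp
    have hcR : (Fintype.card (qRadical q hq) : ℤ) =
        2 ^ Module.finrank (ZMod 2) (qRadical q hq) := by
      rw [Module.card_eq_pow_finrank (K := ZMod 2) (V := qRadical q hq), ZMod.card]; simp
    have hR : Fintype.card (qRadical q hq) =
        (Finset.univ.filter (fun z : V => ∀ y, assocBilin q z y = 0)).card :=
      Fintype.card_of_subtype _ (by intro x; simp; rfl)
    calc (gaussSumQ q) ^ 2
        = ∑ y : V, ∑ x : V, (if q x = 0 then (1:ℤ) else -1) * (if q y = 0 then 1 else -1) := by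
          rw [sq, gaussSumQ, Finset.sum_mul_sum, Finset.sum_comm]
      _ = ∑ y : V, ∑ z : V,
            (if q (z + y) = 0 then (1:ℤ) else -1) * (if q y = 0 then 1 else -1) := by
          refine Finset.sum_congr rfl fun y _ => ?_
          exact (Equiv.sum_comp (Equiv.addRight y)
            (fun x => (if q x = 0 then (1:ℤ) else -1) * (if q y = 0 then 1 else -1))).symm
      _ = ∑ z : V, (if q z = 0 then (1:ℤ) else -1) *
            (if (∀ y, assocBilin q z y = 0) then (Fintype.card V : ℤ) else 0) := by
          rw [Finset.sum_comm]
          refine Finset.sum_congr rfl fun z _ => ?_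
          rw [← inner_sum_aux q hq z, Finset.mul_sum]
          exact Finset.sum_congr rfl fun y _ => hs z y
      _ = ∑ z : V, (if (∀ y, assocBilin q z y = 0) then (Fintype.card V : ℤ) else 0) := by
          refine Finset.sum_congr rfl fun z _ => ?_
          by_cases h : ∀ y, assocBilin q z y = 0
          · rw [if_pos h, if_pos (hvan z h), one_mul]
          · rw [if_neg h, mul_zero]
      _ = _ := by
          rw [← Finset.sum_filter, Finset.sum_const, ← hR, nsmul_eq_mul, hcR, hcV, pow_add,
            mul_comm]
  refine ⟨key, fun h => ?_⟩
  rw [h] at key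
  have : (0:ℤ) < 2 ^ (Module.finrank (ZMod 2) V + Module.finrank (ZMod 2) (qRadical q hq)) := by
    positivity
  rw [← key] at this
  simp at this
end

section
/- Let A be an n×n matrix over 𝔽₂, let p, r, t ∈ 𝔽₂ⁿ and s, u, ℓ ∈ 𝔽₂ with s + u = 1, and let A' be the (n+2)×(n+2) block matrix A' = [[A, p, r], [pᵀ, 0, s], [tᵀ, u, ℓ]] (the (n+1)-st column and row both given by p with diagonal entry 0, the (n+2)-nd column given by r and row by t with diagonal entry ℓ, and corner entries s and u with s + u = 1). Then S(A') = 2·S(A). -/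
open Matrix

/-- The Gauss sum `S(A) = Σ_{x ∈ 𝔽₂ⁿ} (-1)^{xᵀAx}` of a square matrix over `𝔽₂`. -/
def matGaussSum {ι : Type*} [Fintype ι] [DecidableEq ι] (A : Matrix ι ι (ZMod 2)) : ℤ :=
  ∑ x : ι → ZMod 2, if x ⬝ᵥ A.mulVec x = 0 then 1 else -1

/-- Enlarging `A` to the block matrix `[[A, p, r], [pᵀ, 0, s], [tᵀ, u, ℓ]]` with `s + u = 1`
doubles the Gauss sum. -/
theorem stmt13 {n : ℕ} (A : Matrix (Fin n) (Fin n) (ZMod 2))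
    (p r t : Fin n → ZMod 2) (s u l : ZMod 2) (hsu : s + u = 1) :
    matGaussSum
      (Matrix.fromBlocks A
        (Matrix.of fun i (k : Fin 2) => ![p i, r i] k)
        (Matrix.of fun (k : Fin 2) i => ![p i, t i] k)
        !![0, s; u, l])
      = 2 * matGaussSum A := by
  unfold matGaussSum
  rw [← (Equiv.sumArrowEquivProdArrow (Fin n) (Fin 2) (ZMod 2)).symm.sum_comp,
    Fintype.sum_prod_type, Finset.mul_sum]
  refine Finset.sum_congr rfl fun x _ => ?_
  rw [← (finTwoArrowEquiv (ZMod 2)).symm.sum_comp, Fintype.sum_prod_type]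
  have key : ∀ y z : ZMod 2,
      ((Equiv.sumArrowEquivProdArrow (Fin n) (Fin 2) (ZMod 2)).symm
        (x, (finTwoArrowEquiv (ZMod 2)).symm (y, z))) ⬝ᵥ (Matrix.fromBlocks A
        (Matrix.of fun i (k : Fin 2) => ![p i, r i] k)
        (Matrix.of fun (k : Fin 2) i => ![p i, t i] k)
        !![0, s; u, l]).mulVec ((Equiv.sumArrowEquivProdArrow (Fin n) (Fin 2) (ZMod 2)).symm
        (x, (finTwoArrowEquiv (ZMod 2)).symm (y, z)))
      = x ⬝ᵥ A.mulVec x + z * (x ⬝ᵥ r + t ⬝ᵥ x + y + l * z) := by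
    intro y z
    have e : (Equiv.sumArrowEquivProdArrow (Fin n) (Fin 2) (ZMod 2)).symm
        (x, (finTwoArrowEquiv (ZMod 2)).symm (y, z)) = Sum.elim x ![y, z] := rfl
    have h2 : (2 : ZMod 2) = 0 := rfl
    have h1 : (Matrix.of fun i (k : Fin 2) => ![p i, r i] k) *ᵥ ![y, z] = y • p + z • r := by
      ext i
      simp [Matrix.mulVec, dotProduct, Fin.sum_univ_two, mul_comm]
    have h3 : (Matrix.of fun (k : Fin 2) i => ![p i, t i] k) *ᵥ x = ![p ⬝ᵥ x, t ⬝ᵥ x] := by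
      ext k
      fin_cases k <;> simp [Matrix.mulVec, dotProduct]
    have h4 : !![0, s; u, l] *ᵥ ![y, z] = ![s * z, u * y + l * z] := by
      ext k
      fin_cases k <;> simp [Matrix.mulVec, dotProduct, Fin.sum_univ_two]
    rw [e, Matrix.fromBlocks_mulVec, sumElim_dotProduct_sumElim]
    simp only [Sum.elim_comp_inl, Sum.elim_comp_inr]
    rw [h1, h3, h4, dotProduct_add, dotProduct_add, dotProduct_smul, dotProduct_smul,
      dotProduct_comm p x]
    simp only [smul_eq_mul, dotProduct, Fin.sum_univ_two, Pi.add_apply, Matrix.cons_val_zero,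
      Matrix.cons_val_one]
    linear_combination (y * ∑ i, x i * p i) * h2 + y * z * hsu
  simp only [key]
  generalize x ⬝ᵥ A.mulVec x = a
  generalize x ⬝ᵥ r + t ⬝ᵥ x = b
  clear key hsu
  revert a b l
  decide
end

section
/- Let m ≥ 1 and let E be a finite set of sign vectors ε ∈ Bool^m with |E| even. Then there exists a map s : {1, …, m} → Bool (a partition of the indices into two subsets) such that for all indices j, k with s(j) = s(k), the number #{ε ∈ E : ε_j = ε_k} is even. -/
theorem stmt15_aux (m : ℕ) (j k : Fin m) (E : Finset (Fin m → Bool)) :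
    ((E.filter (fun ε => ε j = ε k)).card + (E.filter (fun ε => ε j = true)).card
      + (E.filter (fun ε => ε k = true)).card + E.card) % 2 = 0 := by
  induction E using Finset.induction_on with
  | empty => simp
  | insert a s ha ih =>
    simp only [Finset.filter_insert]
    rw [Finset.card_insert_of_notMem ha]
    cases h1 : a j <;> cases h2 : a k <;> simp [ha] <;> omega

/-- For a finite set `E` of sign vectors in `Bool^m` of even cardinality, there is a
partition of the colors `{1, …, m}` into two subsets (given by `s : Fin m → Bool`) such
that `#{ε ∈ E : ε_j = ε_k}` is even whenever `j` and `k` lie in the same subset. -/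
theorem stmt15 (m : ℕ) (hm : 1 ≤ m) (E : Finset (Fin m → Bool)) (hE : Even E.card) :
    ∃ s : Fin m → Bool, ∀ j k : Fin m, s j = s k →
      Even (E.filter (fun ε => ε j = ε k)).card := by
  refine ⟨fun j => decide ((E.filter (fun ε => ε j = true)).card % 2 = 0), ?_⟩
  intro j k h
  have := stmt15_aux m j k E
  rw [decide_eq_decide] at h
  rw [Nat.even_iff] at hE ⊢
  omega
end

section
/- Let m, n ∈ ℕ, let i ∈ {1, …, m} be an index and σ ∈ Bool a sign, let ξ : Bool → 𝔽₂ⁿ be any map, let ℓ ∈ 𝔽₂, and let A(ε) be a family of n×n matrices over 𝔽₂ indexed by sign vectors ε ∈ Bool^m. Define the family of (n+2)×(n+2) matrices A'(ε) = [[A(ε), 0, ξ(ε_i)], [0, 0, δ(ε_i = σ)], [ξ(¬ε_i)ᵀ, δ(ε_i = ¬σ), ℓ]]. Then for every finite set E ⊆ Bool^m of even cardinality, S^E(A') = 4·S^E(A). (This is the effect of a handle attachment move (T1) on generalized Seifert matrices.) -/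
open Matrix

/-- The Gauss sum `S^E(A)` of the sum `A^E = Σ_{ε ∈ E} A(ε)` of a family of matrices over
`𝔽₂` indexed by sign vectors. -/
def famGaussSum {m : ℕ} {ι : Type*} [Fintype ι] [DecidableEq ι]
    (E : Finset (Fin m → Bool)) (A : (Fin m → Bool) → Matrix ι ι (ZMod 2)) : ℤ :=
  matGaussSum (∑ ε ∈ E, A ε)

/-- Effect of a handle attachment move (T1) on generalized Seifert matrices: passing from
`A(ε)` to `A'(ε) = [[A(ε), 0, ξ(ε_i)], [0, 0, δ(ε_i = σ)], [ξ(¬ε_i)ᵀ, δ(ε_i = ¬σ), ℓ]]`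
multiplies the Gauss sum `S^E` by `4`, for every finite `E` of even cardinality. -/
theorem stmt16 (m n : ℕ) (i : Fin m) (σ : Bool)
    (ξ : Bool → Fin n → ZMod 2) (l : ZMod 2)
    (A : (Fin m → Bool) → Matrix (Fin n) (Fin n) (ZMod 2)) :
    ∀ E : Finset (Fin m → Bool), Even E.card →
      famGaussSum E (fun ε =>
        Matrix.fromBlocks (A ε)
          (Matrix.of fun x (k : Fin 2) => ![(0 : ZMod 2), ξ (ε i) x] k)
          (Matrix.of fun (k : Fin 2) x => ![(0 : ZMod 2), ξ (!(ε i)) x] k)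
          !![0, if ε i = σ then 1 else 0;
             if ε i = !σ then 1 else 0, l])
        = 4 * famGaussSum E A := by
  intro E hE
  have key : ∀ (ε : Fin m → Bool) (u : Fin n → ZMod 2) (v : Fin 2 → ZMod 2),
      Sum.elim u v ⬝ᵥ (Matrix.fromBlocks (A ε)
          (Matrix.of fun x (k : Fin 2) => ![(0 : ZMod 2), ξ (ε i) x] k)
          (Matrix.of fun (k : Fin 2) x => ![(0 : ZMod 2), ξ (!(ε i)) x] k)
          !![0, if ε i = σ then 1 else 0;
             if ε i = !σ then 1 else 0, l]).mulVec (Sum.elim u v)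
      = u ⬝ᵥ (A ε).mulVec u +
        (v 1 * (∑ x, u x * ξ true x + ∑ x, u x * ξ false x) + v 0 * v 1 + l * v 1 * v 1) := by
    intro ε u v
    rw [Matrix.fromBlocks_mulVec, sumElim_dotProduct_sumElim]
    simp only [Sum.elim_comp_inl, Sum.elim_comp_inr, dotProduct_add]
    have h1 : u ⬝ᵥ (Matrix.of fun x (k : Fin 2) => ![(0 : ZMod 2), ξ (ε i) x] k).mulVec v
        = v 1 * ∑ x, u x * ξ (ε i) x := by
      simp only [dotProduct, Matrix.mulVec, Fin.sum_univ_two, Matrix.of_apply, Finset.mul_sum]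
      refine Finset.sum_congr rfl fun x _ => ?_
      simp
      ring
    have h2 : v ⬝ᵥ (Matrix.of fun (k : Fin 2) x => ![(0 : ZMod 2), ξ (!(ε i)) x] k).mulVec u
        = v 1 * ∑ x, u x * ξ (!(ε i)) x := by
      simp [dotProduct, Matrix.mulVec, Fin.sum_univ_two, mul_comm]
    rw [h1, h2]
    cases ε i <;> cases σ <;>
      simp [dotProduct, Matrix.mulVec, Fin.sum_univ_two] <;> ring
  have hsum : ∀ (u : Fin n → ZMod 2) (v : Fin 2 → ZMod 2),
      Sum.elim u v ⬝ᵥ (∑ ε ∈ E, Matrix.fromBlocks (A ε)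
          (Matrix.of fun x (k : Fin 2) => ![(0 : ZMod 2), ξ (ε i) x] k)
          (Matrix.of fun (k : Fin 2) x => ![(0 : ZMod 2), ξ (!(ε i)) x] k)
          !![0, if ε i = σ then 1 else 0;
             if ε i = !σ then 1 else 0, l]).mulVec (Sum.elim u v)
      = u ⬝ᵥ (∑ ε ∈ E, A ε).mulVec u := by
    intro u v
    have hc : (E.card : ZMod 2) = 0 := (ZMod.natCast_eq_zero_iff_even).2 hE
    rw [Matrix.sum_mulVec, Matrix.sum_mulVec, dotProduct_sum, dotProduct_sum]
    simp only [key]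
    rw [Finset.sum_add_distrib, Finset.sum_const, nsmul_eq_mul, hc, zero_mul, add_zero]
  unfold famGaussSum matGaussSum
  rw [← (Equiv.sumArrowEquivProdArrow (Fin n) (Fin 2) (ZMod 2)).symm.sum_comp,
    Fintype.sum_prod_type, Finset.mul_sum]
  refine Finset.sum_congr rfl fun u _ => ?_
  have h3 : ∀ v : Fin 2 → ZMod 2,
      (Equiv.sumArrowEquivProdArrow (Fin n) (Fin 2) (ZMod 2)).symm (u, v) = Sum.elim u v :=
    fun v => rfl
  simp only [h3, hsum]
  simp [ZMod.card]
end

section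
/- Let m, n ∈ ℕ, let i, j ∈ {1, …, m} be indices, let ξ : Bool × Bool → 𝔽₂ⁿ be any map, let ℓ : Bool × Bool → 𝔽₂ satisfy ℓ(a,b) = ℓ(¬a,¬b) for all a, b, and let A(ε) be a family of n×n matrices over 𝔽₂ indexed by sign vectors ε ∈ Bool^m. Define the family of (n+1)×(n+1) matrices A'(ε) = [[A(ε), ξ(ε_i, ε_j)], [ξ(¬ε_i, ¬ε_j)ᵀ, ℓ(ε_i, ε_j)]]. If E ⊆ Bool^m is a finite set of even cardinality such that #{ε ∈ E : ε_i = true and ε_j = true} and #{ε ∈ E : ε_i = false and ε_j = false} have the same parity, then S^E(A') = 2·S^E(A). (This is the effect of adding a clasp to a C-complex, realizing a crossing change between components of colors i and j.) -/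
open Matrix

theorem clasp_sum_zero {m : ℕ} (i j : Fin m) (E : Finset (Fin m → Bool)) (hE : Even E.card)
    (hpar : (E.filter (fun ε => ε i = true ∧ ε j = true)).card % 2
          = (E.filter (fun ε => ε i = false ∧ ε j = false)).card % 2)
    (g : Bool → Bool → ZMod 2) (hg : ∀ a b, g a b = g (!a) (!b)) :
    ∑ ε ∈ E, g (ε i) (ε j) = 0 := by
  have h1 : ∀ ε : Fin m → Bool, g (ε i) (ε j) = g true false
      + ((if ε i = true ∧ ε j = true then 1 else 0)
        + (if ε i = false ∧ ε j = false then 1 else 0)) * (g true true - g true false) := by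
    intro ε
    have a := hg false false
    have b := hg false true
    simp only [Bool.not_false, Bool.not_true] at a b
    cases ε i <;> cases ε j <;> simp [a, b]
  rw [Finset.sum_congr rfl (fun ε _ => h1 ε), Finset.sum_add_distrib, ← Finset.sum_mul,
    Finset.sum_add_distrib, Finset.sum_boole, Finset.sum_boole, Finset.sum_const, nsmul_eq_mul]
  have h2 : (E.card : ZMod 2) = 0 := (ZMod.natCast_eq_zero_iff_even).2 hE
  have h3 := (ZMod.natCast_eq_natCast_iff' _ _ 2).2 hpar
  rw [h2, h3, CharTwo.add_self_eq_zero]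
  simp

/-- Effect of adding a clasp to a C-complex on generalized Seifert matrices: passing from
`A(ε)` to `A'(ε) = [[A(ε), ξ(ε_i, ε_j)], [ξ(¬ε_i, ¬ε_j)ᵀ, ℓ(ε_i, ε_j)]]` (with
`ℓ(a,b) = ℓ(¬a,¬b)`) doubles the Gauss sum `S^E`, provided `E` has even cardinality and
`#{ε ∈ E : ε_i = ε_j = true}` and `#{ε ∈ E : ε_i = ε_j = false}` have the same parity. -/
theorem stmt17 (m n : ℕ) (i j : Fin m)
    (ξ : Bool → Bool → Fin n → ZMod 2)
    (l : Bool → Bool → ZMod 2) (hl : ∀ a b, l a b = l (!a) (!b))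
    (A : (Fin m → Bool) → Matrix (Fin n) (Fin n) (ZMod 2))
    (E : Finset (Fin m → Bool)) (hE : Even E.card)
    (hpar : (E.filter (fun ε => ε i = true ∧ ε j = true)).card % 2
          = (E.filter (fun ε => ε i = false ∧ ε j = false)).card % 2) :
    famGaussSum E (fun ε =>
      Matrix.fromBlocks (A ε)
        (Matrix.of fun x (_ : Unit) => ξ (ε i) (ε j) x)
        (Matrix.of fun (_ : Unit) x => ξ (!(ε i)) (!(ε j)) x)
        (Matrix.of fun (_ : Unit) (_ : Unit) => l (ε i) (ε j)))
      = 2 * famGaussSum E A := by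
  unfold famGaussSum matGaussSum
  rw [← (Equiv.sumArrowEquivProdArrow (Fin n) Unit (ZMod 2)).symm.sum_comp,
    Fintype.sum_prod_type, Finset.mul_sum]
  refine Finset.sum_congr rfl fun x _ => ?_
  have key : ∀ t : Unit → ZMod 2,
      (Equiv.sumArrowEquivProdArrow (Fin n) Unit (ZMod 2)).symm (x, t) ⬝ᵥ
        (∑ ε ∈ E, Matrix.fromBlocks (A ε)
        (Matrix.of fun x (_ : Unit) => ξ (ε i) (ε j) x)
        (Matrix.of fun (_ : Unit) x => ξ (!(ε i)) (!(ε j)) x)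
        (Matrix.of fun (_ : Unit) (_ : Unit) => l (ε i) (ε j))).mulVec
        ((Equiv.sumArrowEquivProdArrow (Fin n) Unit (ZMod 2)).symm (x, t))
      = x ⬝ᵥ (∑ ε ∈ E, A ε).mulVec x := by
    intro t
    have hs : (Equiv.sumArrowEquivProdArrow (Fin n) Unit (ZMod 2)).symm (x, t)
        = Sum.elim x t := rfl
    have hz := clasp_sum_zero i j E hE hpar
      (fun a b => t () * (ξ a b ⬝ᵥ x + ξ (!a) (!b) ⬝ᵥ x) + t () * t () * l a b) (by
        intro a b
        simp only [Bool.not_not, ← hl a b]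
        ring)
    rw [hs, Matrix.sum_mulVec, Matrix.sum_mulVec, dotProduct_sum, dotProduct_sum,
      ← add_zero (∑ ε ∈ E, x ⬝ᵥ A ε *ᵥ x), ← hz, ← Finset.sum_add_distrib]
    refine Finset.sum_congr rfl fun ε _ => ?_
    rw [Matrix.fromBlocks_mulVec, sumElim_dotProduct_sumElim]
    simp only [Sum.elim_comp_inl, Sum.elim_comp_inr, dotProduct_add]
    have e1 : x ⬝ᵥ (Matrix.of fun x (_ : Unit) => ξ (ε i) (ε j) x) *ᵥ t
        = t () * (ξ (ε i) (ε j) ⬝ᵥ x) := by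
      simp only [dotProduct, mulVec, Matrix.of_apply, Finset.univ_unique, Finset.sum_singleton,
        Finset.mul_sum]
      exact Finset.sum_congr rfl fun k _ => by
        show x k * (_ * t ()) = _
        ring
    have e2 : t ⬝ᵥ (Matrix.of fun (_ : Unit) x => ξ (!(ε i)) (!(ε j)) x) *ᵥ x
        = t () * (ξ (!(ε i)) (!(ε j)) ⬝ᵥ x) := by
      simp [dotProduct, mulVec]
    have e3 : t ⬝ᵥ (Matrix.of fun (_ : Unit) (_ : Unit) => l (ε i) (ε j)) *ᵥ t
        = t () * t () * l (ε i) (ε j) := by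
      simp [dotProduct, mulVec]
      ring
    rw [e1, e2, e3]
    ring
  simp only [key, Finset.sum_const]
  simp [Finset.card_univ]
end

section
/- Let m, n ∈ ℕ, let i, j ∈ {1, …, m} be indices and σ_i, σ_j ∈ Bool signs, let z₀ ∈ {1, …, n} be a distinguished index with χ(z₀) ∈ 𝔽₂ⁿ the corresponding standard basis vector, let ξ : Bool × Bool → 𝔽₂ⁿ be any map, let ℓ : Bool × Bool → 𝔽₂ satisfy ℓ(a,b) = ℓ(¬a,¬b) for all a, b, and let A(ε) be a family of n×n matrices over 𝔽₂ indexed by sign vectors ε ∈ Bool^m. Define the family of (n+2)×(n+2) matrices A'(ε) = [[A(ε), δ(ε_i = ¬σ_i)·χ(z₀), ξ(ε_i, ε_j)], [δ(ε_i = σ_i)·χ(z₀)ᵀ, 0, δ(ε_i = σ_i)·δ(ε_j = σ_j)], [ξ(¬ε_i, ¬ε_j)ᵀ, δ(ε_i = ¬σ_i)·δ(ε_j = ¬σ_j), ℓ(ε_i, ε_j)]]. Let E ⊆ Bool^m be a finite set of even cardinality, and set n_e = #{ε ∈ E : ε_i = σ_i, ε_j = σ_j} + #{ε ∈ E : ε_i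 = ¬σ_i, ε_j = ¬σ_j}. If n_e is even then S^E(A') = 4·S^E(A), and if n_e is odd then S^E(A') = 2·S^E(A); in particular S^E(A') and S^E(A) always have the same sign. (This is the effect of the move (T5) on generalized Seifert matrices.) -/
open Matrix

theorem t5_sum_split {n : ℕ} (F : (Fin n ⊕ Fin 2 → ZMod 2) → ℤ) :
    ∑ y, F y = ∑ x : Fin n → ZMod 2, ((F (Sum.elim x ![0, 0]) + F (Sum.elim x ![1, 0])) +
      (F (Sum.elim x ![0, 1]) + F (Sum.elim x ![1, 1]))) := by
  rw [← (Equiv.sumArrowEquivProdArrow (Fin n) (Fin 2) (ZMod 2)).symm.sum_comp,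
    Fintype.sum_prod_type]
  refine Finset.sum_congr rfl fun x _ => ?_
  rw [← (finTwoArrowEquiv (ZMod 2)).symm.sum_comp, Fintype.sum_prod_type]
  have h : ∀ G : ZMod 2 → ℤ, ∑ a, G a = G 0 + G 1 := fun G => Fin.sum_univ_two G
  simp only [h]
  change F (Sum.elim x ![0, 0]) + F (Sum.elim x ![0, 1]) +
    (F (Sum.elim x ![1, 0]) + F (Sum.elim x ![1, 1])) = _
  ring

theorem t5_quad {n : ℕ} (A : Matrix (Fin n) (Fin n) (ZMod 2)) (u v p q : Fin n → ZMod 2)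
    (c d e : ZMod 2) (x : Fin n → ZMod 2) (a b : ZMod 2) :
    (Sum.elim x ![a, b]) ⬝ᵥ (Matrix.fromBlocks A
        (Matrix.of fun x (k : Fin 2) => ![u x, v x] k)
        (Matrix.of fun (k : Fin 2) x => ![p x, q x] k)
        !![0, c; d, e]).mulVec (Sum.elim x ![a, b]) =
      x ⬝ᵥ A.mulVec x + a * (u ⬝ᵥ x + p ⬝ᵥ x) + b * (v ⬝ᵥ x + q ⬝ᵥ x + e) + a * b * (c + d) := by
  have hb : b * b = b := by revert b; decide
  have hB : (Matrix.of fun x (k : Fin 2) => ![u x, v x] k).mulVec ![a, b] = a • u + b • v := by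
    ext k; simp [Matrix.mulVec, dotProduct, Fin.sum_univ_two]; ring
  have hC : (Matrix.of fun (k : Fin 2) x => ![p x, q x] k).mulVec x = ![p ⬝ᵥ x, q ⬝ᵥ x] := by
    ext k; fin_cases k <;> simp [Matrix.mulVec, dotProduct]
  rw [Matrix.fromBlocks_mulVec]
  simp only [Sum.elim_comp_inl, Sum.elim_comp_inr, hB, hC, sumElim_dotProduct_sumElim,
    dotProduct_add, dotProduct_smul, smul_eq_mul]
  simp only [dotProduct_comm x u, dotProduct_comm x v]
  simp [Matrix.mulVec, dotProduct, Fin.sum_univ_two]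
  linear_combination e * hb

theorem t5_even {m : ℕ} (i j : Fin m) (σi σj : Bool) (f : Bool → Bool → ZMod 2)
    (hf : ∀ a b, f a b = f (!a) (!b)) (E : Finset (Fin m → Bool)) :
    ∑ ε ∈ E, f (ε i) (ε j) = (E.card : ZMod 2) * f σi (!σj) +
      (∑ ε ∈ E, ((if ε i = σi then 1 else 0) * (if ε j = σj then 1 else 0) +
        (if ε i = !σi then 1 else 0) * (if ε j = !σj then 1 else 0))) *
        (f σi σj + f σi (!σj)) := by
  rw [Finset.sum_mul, ← nsmul_eq_mul, ← Finset.sum_const, ← Finset.sum_add_distrib]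
  refine Finset.sum_congr rfl fun ε _ => ?_
  have h2 : ∀ z : ZMod 2, z + z = 0 := by decide
  have h1 := hf true true
  have h3 := hf true false
  generalize ε i = a
  generalize ε j = b
  simp only [Bool.not_true, Bool.not_false] at h1 h3
  cases a <;> cases b <;> cases σi <;> cases σj <;> simp [h1, h3] <;> grind

/-- Effect of the move (T5) on generalized Seifert matrices: passing from `A(ε)` to
`A'(ε) = [[A(ε), δ(ε_i = ¬σ_i)·χ(z₀), ξ(ε_i, ε_j)],
          [δ(ε_i = σ_i)·χ(z₀)ᵀ, 0, δ(ε_i = σ_i)·δ(ε_j = σ_j)],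
          [ξ(¬ε_i, ¬ε_j)ᵀ, δ(ε_i = ¬σ_i)·δ(ε_j = ¬σ_j), ℓ(ε_i, ε_j)]]`
multiplies the Gauss sum `S^E` by `4` if `n_e` is even and by `2` if `n_e` is odd, where
`n_e = #{ε ∈ E : ε_i = σ_i, ε_j = σ_j} + #{ε ∈ E : ε_i = ¬σ_i, ε_j = ¬σ_j}`; in particular
`S^E(A')` and `S^E(A)` have the same sign. -/
theorem stmt18 (m n : ℕ) (i j : Fin m) (σi σj : Bool) (z₀ : Fin n)
    (ξ : Bool → Bool → Fin n → ZMod 2)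
    (l : Bool → Bool → ZMod 2) (hl : ∀ a b, l a b = l (!a) (!b))
    (A : (Fin m → Bool) → Matrix (Fin n) (Fin n) (ZMod 2))
    (E : Finset (Fin m → Bool)) (hE : Even E.card) :
    let χ : Fin n → ZMod 2 := fun x => if x = z₀ then 1 else 0
    let A' : (Fin m → Bool) → Matrix (Fin n ⊕ Fin 2) (Fin n ⊕ Fin 2) (ZMod 2) := fun ε =>
      Matrix.fromBlocks (A ε)
        (Matrix.of fun x (k : Fin 2) =>
          ![(if ε i = !σi then 1 else 0) * χ x, ξ (ε i) (ε j) x] k)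
        (Matrix.of fun (k : Fin 2) x =>
          ![(if ε i = σi then 1 else 0) * χ x, ξ (!(ε i)) (!(ε j)) x] k)
        !![0, (if ε i = σi then 1 else 0) * (if ε j = σj then 1 else 0);
           (if ε i = !σi then 1 else 0) * (if ε j = !σj then 1 else 0), l (ε i) (ε j)]
    let ne : ℕ := (E.filter (fun ε => ε i = σi ∧ ε j = σj)).card
                + (E.filter (fun ε => ε i = !σi ∧ ε j = !σj)).card
    (Even ne → famGaussSum E A' = 4 * famGaussSum E A) ∧
    (¬ Even ne → famGaussSum E A' = 2 * famGaussSum E A) ∧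
    Int.sign (famGaussSum E A') = Int.sign (famGaussSum E A) := by
  intro χ A' ne
  have h2 : ∀ z : ZMod 2, z + z = 0 := by decide
  have hE0 : (E.card : ZMod 2) = 0 := (ZMod.natCast_eq_zero_iff_even).2 hE
  have hne : (∑ ε ∈ E, ((if ε i = σi then 1 else 0) * (if ε j = σj then 1 else 0) +
        (if ε i = !σi then 1 else 0) * (if ε j = !σj then 1 else 0)) : ZMod 2) = (ne : ZMod 2) := by
    simp only [ne, Nat.cast_add, Finset.card_filter, Nat.cast_sum, ← Finset.sum_add_distrib]
    refine Finset.sum_congr rfl fun ε _ => ?_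
    simp only [← ite_and, mul_ite, mul_one, mul_zero, Nat.cast_ite, Nat.cast_one, Nat.cast_zero]
    congr 1 <;> simp only [and_comm]
  have key : ∀ (x : Fin n → ZMod 2), ∃ w : ZMod 2, ∀ a b : ZMod 2,
      (Sum.elim x ![a, b]) ⬝ᵥ (∑ ε ∈ E, A' ε).mulVec (Sum.elim x ![a, b]) =
        x ⬝ᵥ (∑ ε ∈ E, A ε).mulVec x + b * (ne * w) + a * b * ne := by
    intro x
    let f : Bool → Bool → ZMod 2 := fun s t => ξ s t ⬝ᵥ x + ξ (!s) (!t) ⬝ᵥ x + l s t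
    have hf : ∀ s t, f s t = f (!s) (!t) := by
      intro s t
      simp only [f, Bool.not_not, hl s t]
      ring
    refine ⟨f σi σj + f σi (!σj), fun a b => ?_⟩
    have hs := t5_even i j σi σj f hf E
    rw [hE0, hne, zero_mul, zero_add] at hs
    rw [← hs, ← hne, Matrix.sum_mulVec, Matrix.sum_mulVec, dotProduct_sum, dotProduct_sum,
      Finset.mul_sum, Finset.mul_sum, ← Finset.sum_add_distrib, ← Finset.sum_add_distrib]
    have hz : ∑ ε ∈ E, a * (χ ⬝ᵥ x) = 0 := by
      rw [Finset.sum_const, nsmul_eq_mul, hE0, zero_mul]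
    refine Eq.trans ?_ ((congrArg (fun t => _ + t) hz).trans (add_zero _))
    beta_reduce
    rw [← Finset.sum_add_distrib]
    refine Finset.sum_congr rfl fun ε _ => ?_
    simp only [A']
    rw [t5_quad]
    have hc : ((fun x => (if ε i = !σi then 1 else 0) * χ x) ⬝ᵥ x +
        (fun x => (if ε i = σi then 1 else 0) * χ x) ⬝ᵥ x) = χ ⬝ᵥ x := by
      generalize ε i = s
      cases s <;> cases σi <;> simp [dotProduct]
    rw [hc]
    simp only [f]
    ring
  have hev : Even ne → famGaussSum E A' = 4 * famGaussSum E A := by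
    intro h
    have h0 : (ne : ZMod 2) = 0 := (ZMod.natCast_eq_zero_iff_even).2 h
    unfold famGaussSum matGaussSum
    rw [t5_sum_split, Finset.mul_sum]
    refine Finset.sum_congr rfl fun x _ => ?_
    obtain ⟨w, hw⟩ := key x
    simp only [hw, h0, zero_mul, mul_zero, add_zero]
    ring
  have hod : ¬ Even ne → famGaussSum E A' = 2 * famGaussSum E A := by
    intro h
    have h0 : (ne : ZMod 2) = 1 := (ZMod.natCast_eq_one_iff_odd).2 (Nat.not_even_iff_odd.1 h)
    unfold famGaussSum matGaussSum
    rw [t5_sum_split, Finset.mul_sum]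
    refine Finset.sum_congr rfl fun x _ => ?_
    obtain ⟨w, hw⟩ := key x
    simp only [hw, h0]
    generalize x ⬝ᵥ (∑ ε ∈ E, A ε).mulVec x = t
    clear hw
    revert t w
    decide
  refine ⟨hev, hod, ?_⟩
  by_cases h : Even ne
  · rw [hev h, Int.sign_mul]; exact one_mul _
  · rw [hod h, Int.sign_mul]; exact one_mul _
end
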